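/- Let (L, [,]_L, d) be a differential graded Lie algebra over a field k and 𝕊L its graded symmetric algebra, regarded as a differential graded Poisson algebra with bracket extending [,]_L as a graded biderivation. Then (𝕊L)^e ≅ U(L⋊L) as differential graded algebras, where L⋊L is the graded semidirect product DG Lie algebra and U denotes the universal enveloping algebra of a DG Lie algebra. -/

import Mathlib

open scoped TensorProduct

noncomputable section

namespace DGPaper

universe u

/-- A differential graded Lie algebra structure on a `k`-vector space `V`. -/
structure DGLAOn (k : Type u) [Field k] (V : Type u) [AddCommGroup V] [Module k V] where
  gr : ℤ → Submodule k V
  decomp : DirectSum.Decomposition gr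
  br : V →ₗ[k] V →ₗ[k] V
  br_mem : ∀ {i j : ℤ} {a b : V}, a ∈ gr i → b ∈ gr j → br a b ∈ gr (i + j)
  br_antisymm : ∀ {i j : ℤ} {a b : V}, a ∈ gr i → b ∈ gr j →
    br a b = -(((-1 : k) ^ (i * j)) • br b a)
  br_jacobi : ∀ {i j l : ℤ} {a b c : V}, a ∈ gr i → b ∈ gr j → c ∈ gr l →
    br a (br b c) = br (br a b) c + ((-1 : k) ^ (i * j)) • br b (br a c)
  d : V →ₗ[k] V
  d_mem : ∀ {i : ℤ} {a : V}, a ∈ gr i → d a ∈ gr (i + 1)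
  d_sq : ∀ a : V, d (d a) = 0
  d_br : ∀ {i j : ℤ} {a b : V}, a ∈ gr i → b ∈ gr j →
    d (br a b) = br (d a) b + ((-1 : k) ^ i) • br a (d b)

/-- A differential graded (associative, unital) algebra structure on a `k`-vector space `N`. -/
structure DGAOn (k : Type u) [Field k] (N : Type u) [AddCommGroup N] [Module k N] where
  gr : ℤ → Submodule k N
  decomp : DirectSum.Decomposition gr
  mul : N →ₗ[k] N →ₗ[k] N
  one : N
  one_mem : one ∈ gr 0
  mul_mem : ∀ {i j : ℤ} {a b : N}, a ∈ gr i → b ∈ gr j → mul a b ∈ gr (i + j)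
  mul_assoc : ∀ a b c : N, mul (mul a b) c = mul a (mul b c)
  one_mul : ∀ a : N, mul one a = a
  mul_one : ∀ a : N, mul a one = a
  d : N →ₗ[k] N
  d_mem : ∀ {i : ℤ} {a : N}, a ∈ gr i → d a ∈ gr (i + 1)
  d_sq : ∀ a : N, d (d a) = 0
  d_mul : ∀ {i j : ℤ} {a b : N}, a ∈ gr i → b ∈ gr j →
    d (mul a b) = mul (d a) b + ((-1 : k) ^ i) • mul a (d b)

/-- A differential graded Poisson algebra structure on a `k`-vector space `M`. -/
structure DGPAOn (k : Type u) [Field k] (M : Type u) [AddCommGroup M] [Module k M] where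
  gr : ℤ → Submodule k M
  decomp : DirectSum.Decomposition gr
  mul : M →ₗ[k] M →ₗ[k] M
  one : M
  one_mem : one ∈ gr 0
  mul_mem : ∀ {i j : ℤ} {a b : M}, a ∈ gr i → b ∈ gr j → mul a b ∈ gr (i + j)
  mul_assoc : ∀ a b c : M, mul (mul a b) c = mul a (mul b c)
  one_mul : ∀ a : M, mul one a = a
  mul_one : ∀ a : M, mul a one = a
  mul_comm : ∀ {i j : ℤ} {a b : M}, a ∈ gr i → b ∈ gr j →
    mul a b = ((-1 : k) ^ (i * j)) • mul b a
  br : M →ₗ[k] M →ₗ[k] M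
  br_mem : ∀ {i j : ℤ} {a b : M}, a ∈ gr i → b ∈ gr j → br a b ∈ gr (i + j)
  br_antisymm : ∀ {i j : ℤ} {a b : M}, a ∈ gr i → b ∈ gr j →
    br a b = -(((-1 : k) ^ (i * j)) • br b a)
  br_jacobi : ∀ {i j l : ℤ} {a b c : M}, a ∈ gr i → b ∈ gr j → c ∈ gr l →
    br a (br b c) = br (br a b) c + ((-1 : k) ^ (i * j)) • br b (br a c)
  br_deriv : ∀ {i j l : ℤ} {a b c : M}, a ∈ gr i → b ∈ gr j → c ∈ gr l →
    br a (mul b c) = mul (br a b) c + ((-1 : k) ^ (i * j)) • mul b (br a c)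
  d : M →ₗ[k] M
  d_mem : ∀ {i : ℤ} {a : M}, a ∈ gr i → d a ∈ gr (i + 1)
  d_sq : ∀ a : M, d (d a) = 0
  d_br : ∀ {i j : ℤ} {a b : M}, a ∈ gr i → b ∈ gr j →
    d (br a b) = br (d a) b + ((-1 : k) ^ i) • br a (d b)
  d_mul : ∀ {i j : ℤ} {a b : M}, a ∈ gr i → b ∈ gr j →
    d (mul a b) = mul (d a) b + ((-1 : k) ^ i) • mul a (d b)

section Defs

variable {k : Type u} [Field k]

/-- The differential graded Lie algebra underlying a differential graded Poisson algebra. -/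
def DGPAOn.toLie {M : Type u} [AddCommGroup M] [Module k M] (P : DGPAOn k M) :
    DGLAOn k M where
  gr := P.gr
  decomp := P.decomp
  br := P.br
  br_mem := P.br_mem
  br_antisymm := P.br_antisymm
  br_jacobi := P.br_jacobi
  d := P.d
  d_mem := P.d_mem
  d_sq := P.d_sq
  d_br := P.d_br

section Maps

variable {M N : Type u} [AddCommGroup M] [Module k M] [AddCommGroup N] [Module k N]

/-- A morphism of differential graded algebras (degree-0, multiplicative, unital,
commuting with the differentials). -/
def IsDGAHom (E : DGAOn k M) (F : DGAOn k N) (f : M →ₗ[k] N) : Prop :=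
  (∀ {n : ℤ} {x : M}, x ∈ E.gr n → f x ∈ F.gr n) ∧
  (∀ x y : M, f (E.mul x y) = F.mul (f x) (f y)) ∧
  f E.one = F.one ∧
  ∀ x : M, f (E.d x) = F.d (f x)

/-- A morphism of differential graded Poisson algebras. -/
def IsDGPAHom (P : DGPAOn k M) (Q : DGPAOn k N) (f : M →ₗ[k] N) : Prop :=
  (∀ {n : ℤ} {x : M}, x ∈ P.gr n → f x ∈ Q.gr n) ∧
  (∀ x y : M, f (P.mul x y) = Q.mul (f x) (f y)) ∧
  f P.one = Q.one ∧
  (∀ x : M, f (P.d x) = Q.d (f x)) ∧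
  ∀ x y : M, f (P.br x y) = Q.br (f x) (f y)

end Maps

section Tensor

variable {A B : Type u} [AddCommGroup A] [Module k A] [AddCommGroup B] [Module k B]

/-- `R` is the tensor product differential graded Poisson algebra structure on `A ⊗[k] B`
induced by `P` and `Q`. -/
def IsTensorDGPA (P : DGPAOn k A) (Q : DGPAOn k B) (R : DGPAOn k (A ⊗[k] B)) : Prop :=
  (∀ n : ℤ, R.gr n = Submodule.span k {z : A ⊗[k] B |
      ∃ (i j : ℤ) (a : A) (b : B), i + j = n ∧ a ∈ P.gr i ∧ b ∈ Q.gr j ∧ z = a ⊗ₜ[k] b}) ∧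
  R.one = P.one ⊗ₜ[k] Q.one ∧
  (∀ {i j i' j' : ℤ} {a a' : A} {b b' : B},
      a ∈ P.gr i → b ∈ Q.gr j → a' ∈ P.gr i' → b' ∈ Q.gr j' →
    R.mul (a ⊗ₜ[k] b) (a' ⊗ₜ[k] b') = ((-1 : k) ^ (i' * j)) • (P.mul a a' ⊗ₜ[k] Q.mul b b')) ∧
  (∀ {i j : ℤ} {a : A} {b : B}, a ∈ P.gr i → b ∈ Q.gr j →
    R.d (a ⊗ₜ[k] b) = P.d a ⊗ₜ[k] b + ((-1 : k) ^ i) • (a ⊗ₜ[k] Q.d b)) ∧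
  (∀ {i j i' j' : ℤ} {a a' : A} {b b' : B},
      a ∈ P.gr i → b ∈ Q.gr j → a' ∈ P.gr i' → b' ∈ Q.gr j' →
    R.br (a ⊗ₜ[k] b) (a' ⊗ₜ[k] b') =
      ((-1 : k) ^ (i' * j)) • (P.br a a' ⊗ₜ[k] Q.mul b b' + P.mul a a' ⊗ₜ[k] Q.br b b'))

/-- `G` is the tensor product differential graded algebra structure on `A ⊗[k] B`
induced by `E` and `F` (with the Koszul sign rule). -/
def IsTensorDGA (E : DGAOn k A) (F : DGAOn k B) (G : DGAOn k (A ⊗[k] B)) : Prop :=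
  (∀ n : ℤ, G.gr n = Submodule.span k {z : A ⊗[k] B |
      ∃ (i j : ℤ) (x : A) (y : B), i + j = n ∧ x ∈ E.gr i ∧ y ∈ F.gr j ∧ z = x ⊗ₜ[k] y}) ∧
  G.one = E.one ⊗ₜ[k] F.one ∧
  (∀ {i j i' j' : ℤ} {x x' : A} {y y' : B},
      x ∈ E.gr i → y ∈ F.gr j → x' ∈ E.gr i' → y' ∈ F.gr j' →
    G.mul (x ⊗ₜ[k] y) (x' ⊗ₜ[k] y') = ((-1 : k) ^ (i' * j)) • (E.mul x x' ⊗ₜ[k] F.mul y y')) ∧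
  (∀ {i j : ℤ} {x : A} {y : B}, x ∈ E.gr i → y ∈ F.gr j →
    G.d (x ⊗ₜ[k] y) = E.d x ⊗ₜ[k] y + ((-1 : k) ^ i) • (x ⊗ₜ[k] F.d y))

end Tensor

section Env

variable {M : Type u} [AddCommGroup M] [Module k M]

/-- The defining relations of the universal enveloping algebra `A^e` of a differential
graded Poisson algebra, imposed on the tensor algebra of `M × M`; the first copy of `M`
gives the generators `m_a`, the second copy the generators `h_a`. -/
inductive EnvRel (P : DGPAOn k M) :
    TensorAlgebra k (M × M) → TensorAlgebra k (M × M) → Prop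
  | relone : EnvRel P (TensorAlgebra.ι k ((P.one, 0) : M × M)) 1
  | relmul (a b : M) :
      EnvRel P (TensorAlgebra.ι k ((P.mul a b, 0) : M × M))
        (TensorAlgebra.ι k ((a, 0) : M × M) * TensorAlgebra.ι k ((b, 0) : M × M))
  | relhmul {i j : ℤ} {a b : M} (ha : a ∈ P.gr i) (hb : b ∈ P.gr j) :
      EnvRel P (TensorAlgebra.ι k ((0, P.mul a b) : M × M))
        (TensorAlgebra.ι k ((a, 0) : M × M) * TensorAlgebra.ι k ((0, b) : M × M) +
          ((-1 : k) ^ (i * j)) •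
            (TensorAlgebra.ι k ((b, 0) : M × M) * TensorAlgebra.ι k ((0, a) : M × M)))
  | relmbr {i j : ℤ} {a b : M} (ha : a ∈ P.gr i) (hb : b ∈ P.gr j) :
      EnvRel P (TensorAlgebra.ι k ((P.br a b, 0) : M × M))
        (TensorAlgebra.ι k ((0, a) : M × M) * TensorAlgebra.ι k ((b, 0) : M × M) -
          ((-1 : k) ^ (i * j)) •
            (TensorAlgebra.ι k ((b, 0) : M × M) * TensorAlgebra.ι k ((0, a) : M × M)))
  | relhbr {i j : ℤ} {a b : M} (ha : a ∈ P.gr i) (hb : b ∈ P.gr j) :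
      EnvRel P (TensorAlgebra.ι k ((0, P.br a b) : M × M))
        (TensorAlgebra.ι k ((0, a) : M × M) * TensorAlgebra.ι k ((0, b) : M × M) -
          ((-1 : k) ^ (i * j)) •
            (TensorAlgebra.ι k ((0, b) : M × M) * TensorAlgebra.ι k ((0, a) : M × M)))

/-- The universal enveloping algebra `A^e` of a differential graded Poisson algebra,
as a quotient of the tensor algebra on two copies of `A`. -/
abbrev Env (P : DGPAOn k M) : Type u := RingQuot (EnvRel P)

/-- The generators `m_a` of `A^e`. -/
def mgen (P : DGPAOn k M) : M →ₗ[k] Env P :=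
  (RingQuot.mkAlgHom k (EnvRel P)).toLinearMap ∘ₗ
    ((TensorAlgebra.ι k : (M × M) →ₗ[k] TensorAlgebra k (M × M)) ∘ₗ LinearMap.inl k M M)

/-- The generators `h_a` of `A^e`. -/
def hgen (P : DGPAOn k M) : M →ₗ[k] Env P :=
  (RingQuot.mkAlgHom k (EnvRel P)).toLinearMap ∘ₗ
    ((TensorAlgebra.ι k : (M × M) →ₗ[k] TensorAlgebra k (M × M)) ∘ₗ LinearMap.inr k M M)

/-- `E` is the differential graded algebra structure on `A^e`, with the ring
multiplication of `A^e`, grading `|m_a| = |h_a| = |a|` and differential determined by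
`∂(m_a) = m_{d a}`, `∂(h_a) = h_{d a}` and the graded Leibniz rule. -/
def IsEnvDGA (P : DGPAOn k M) (E : DGAOn k (Env P)) : Prop :=
  (∀ x y : Env P, E.mul x y = x * y) ∧
  E.one = 1 ∧
  (∀ {i : ℤ} {a : M}, a ∈ P.gr i → mgen P a ∈ E.gr i) ∧
  (∀ {i : ℤ} {a : M}, a ∈ P.gr i → hgen P a ∈ E.gr i) ∧
  (∀ a : M, E.d (mgen P a) = mgen P (P.d a)) ∧
  (∀ a : M, E.d (hgen P a) = hgen P (P.d a))

end Env

section Lie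

variable {V : Type u} [AddCommGroup V] [Module k V]

/-- The defining relations of the universal enveloping algebra of a differential graded
Lie algebra. -/
inductive LieRel (L : DGLAOn k V) : TensorAlgebra k V → TensorAlgebra k V → Prop
  | rel {i j : ℤ} {a b : V} (ha : a ∈ L.gr i) (hb : b ∈ L.gr j) :
      LieRel L
        (TensorAlgebra.ι k a * TensorAlgebra.ι k b -
          ((-1 : k) ^ (i * j)) • (TensorAlgebra.ι k b * TensorAlgebra.ι k a))
        (TensorAlgebra.ι k (L.br a b))

/-- The universal enveloping algebra `U(L)` of a differential graded Lie algebra `L`. -/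
abbrev ULie (L : DGLAOn k V) : Type u := RingQuot (LieRel L)

/-- The canonical map `L → U(L)`. -/
def uGen (L : DGLAOn k V) : V →ₗ[k] ULie L :=
  (RingQuot.mkAlgHom k (LieRel L)).toLinearMap ∘ₗ TensorAlgebra.ι k

/-- `E` is the differential graded algebra structure of `U(L)`. -/
def IsULieDGA (L : DGLAOn k V) (E : DGAOn k (ULie L)) : Prop :=
  (∀ x y : ULie L, E.mul x y = x * y) ∧
  E.one = 1 ∧
  (∀ {i : ℤ} {a : V}, a ∈ L.gr i → uGen L a ∈ E.gr i) ∧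
  (∀ a : V, E.d (uGen L a) = uGen L (L.d a))

/-- The graded-symmetry relations defining the graded symmetric algebra of `L`. -/
inductive SymRel (L : DGLAOn k V) : TensorAlgebra k V → TensorAlgebra k V → Prop
  | rel {i j : ℤ} {a b : V} (ha : a ∈ L.gr i) (hb : b ∈ L.gr j) :
      SymRel L (TensorAlgebra.ι k a * TensorAlgebra.ι k b)
        (((-1 : k) ^ (i * j)) • (TensorAlgebra.ι k b * TensorAlgebra.ι k a))

/-- The graded symmetric algebra `𝕊L` of a differential graded Lie algebra `L`. -/
abbrev SymAlg (L : DGLAOn k V) : Type u := RingQuot (SymRel L)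

/-- The canonical map `L → 𝕊L`. -/
def sGen (L : DGLAOn k V) : V →ₗ[k] SymAlg L :=
  (RingQuot.mkAlgHom k (SymRel L)).toLinearMap ∘ₗ TensorAlgebra.ι k

/-- `R` is the differential graded Poisson algebra structure on `𝕊L` with differential
extending `d` and bracket extending the Lie bracket of `L` as a graded biderivation. -/
def IsSymDGPA (L : DGLAOn k V) (R : DGPAOn k (SymAlg L)) : Prop :=
  (∀ x y : SymAlg L, R.mul x y = x * y) ∧
  R.one = 1 ∧
  (∀ {i : ℤ} {a : V}, a ∈ L.gr i → sGen L a ∈ R.gr i) ∧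
  (∀ a : V, R.d (sGen L a) = sGen L (L.d a)) ∧
  (∀ a b : V, R.br (sGen L a) (sGen L b) = sGen L (L.br a b))

/-- `S` is the graded semidirect product differential graded Lie algebra `L ⋊ L`. -/
def IsSemidirect (L : DGLAOn k V) (S : DGLAOn k (V × V)) : Prop :=
  (∀ n : ℤ, S.gr n = (L.gr n).prod (L.gr n)) ∧
  (∀ z : V × V, S.d z = (L.d z.1, L.d z.2)) ∧
  (∀ {i j : ℤ} {x₁ x₂ y₁ y₂ : V}, x₁ ∈ L.gr i → x₂ ∈ L.gr i → y₁ ∈ L.gr j → y₂ ∈ L.gr j →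
    S.br (x₁, x₂) (y₁, y₂) =
      (L.br x₂ y₁ - ((-1 : k) ^ (i * j)) • L.br y₂ x₁, L.br x₂ y₂))

end Lie

section Smash

variable {M : Type u} [AddCommGroup M] [Module k M]

/-- The generators `1#(ab) - a#b - (-1)^{|a||b|} b#a` of the ideal defining `A^E`
inside the smash product `A # U(A)`. -/
def smashGens (P : DGPAOn k M) : Set (M ⊗[k] ULie P.toLie) :=
  {z | ∃ (i j : ℤ) (a b : M), a ∈ P.gr i ∧ b ∈ P.gr j ∧
    z = P.one ⊗ₜ[k] uGen P.toLie (P.mul a b) - a ⊗ₜ[k] uGen P.toLie b -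
        ((-1 : k) ^ (i * j)) • (b ⊗ₜ[k] uGen P.toLie a)}

/-- The two-sided ideal generated by a set `T` in a differential graded algebra `S`. -/
def idealGen {N : Type u} [AddCommGroup N] [Module k N] (S : DGAOn k N) (T : Set N) :
    Submodule k N :=
  sInf {I : Submodule k N | T ⊆ I ∧ ∀ x ∈ I, ∀ y : N, S.mul x y ∈ I ∧ S.mul y x ∈ I}

/-- `S` is the smash product differential graded algebra `A # U(A)`. -/
def IsSmash (P : DGPAOn k M) (EU : DGAOn k (ULie P.toLie))
    (S : DGAOn k (M ⊗[k] ULie P.toLie)) : Prop :=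
  S.one = P.one ⊗ₜ[k] (1 : ULie P.toLie) ∧
  (∀ a b : M, S.mul (a ⊗ₜ[k] (1 : ULie P.toLie)) (b ⊗ₜ[k] (1 : ULie P.toLie)) =
      P.mul a b ⊗ₜ[k] (1 : ULie P.toLie)) ∧
  (∀ u v : ULie P.toLie, S.mul (P.one ⊗ₜ[k] u) (P.one ⊗ₜ[k] v) = P.one ⊗ₜ[k] (u * v)) ∧
  (∀ (a : M) (u : ULie P.toLie), S.mul (a ⊗ₜ[k] (1 : ULie P.toLie)) (P.one ⊗ₜ[k] u) =
      a ⊗ₜ[k] u) ∧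
  (∀ {i j : ℤ} {c b : M}, c ∈ P.gr i → b ∈ P.gr j →
    S.mul (P.one ⊗ₜ[k] uGen P.toLie c) (b ⊗ₜ[k] (1 : ULie P.toLie)) =
      P.br c b ⊗ₜ[k] (1 : ULie P.toLie) + ((-1 : k) ^ (i * j)) • (b ⊗ₜ[k] uGen P.toLie c)) ∧
  (∀ {i j : ℤ} {a : M} {u : ULie P.toLie}, a ∈ P.gr i → u ∈ EU.gr j →
      a ⊗ₜ[k] u ∈ S.gr (i + j)) ∧
  (∀ {i : ℤ} {a : M}, a ∈ P.gr i → ∀ u : ULie P.toLie,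
    S.d (a ⊗ₜ[k] u) = P.d a ⊗ₜ[k] u + ((-1 : k) ^ i) • (a ⊗ₜ[k] EU.d u))

/-- `R` is the quotient differential graded algebra structure of `S` by the ideal `I`. -/
def IsQuotDGA {N : Type u} [AddCommGroup N] [Module k N] (S : DGAOn k N)
    (I : Submodule k N) (R : DGAOn k (N ⧸ I)) : Prop :=
  (∀ n : ℤ, R.gr n = Submodule.map I.mkQ (S.gr n)) ∧
  R.one = I.mkQ S.one ∧
  (∀ x y : N, R.mul (I.mkQ x) (I.mkQ y) = I.mkQ (S.mul x y)) ∧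
  (∀ x : N, R.d (I.mkQ x) = I.mkQ (S.d x))

end Smash

section Op

variable {M N : Type u} [AddCommGroup M] [Module k M] [AddCommGroup N] [Module k N]

/-- `P'` is the opposite differential graded Poisson algebra of `P` (the product is
unchanged by graded commutativity, the bracket is negated). -/
def IsOpDGPA (P P' : DGPAOn k M) : Prop :=
  P'.gr = P.gr ∧ (∀ x y : M, P'.mul x y = P.mul x y) ∧ P'.one = P.one ∧ P'.d = P.d ∧
  (∀ x y : M, P'.br x y = - P.br x y)

/-- `E'` is the opposite differential graded algebra of `E` (with the Koszul sign). -/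
def IsOpDGA (E E' : DGAOn k N) : Prop :=
  E'.gr = E.gr ∧ E'.one = E.one ∧ E'.d = E.d ∧
  (∀ {i j : ℤ} {x y : N}, x ∈ E.gr i → y ∈ E.gr j →
    E'.mul x y = ((-1 : k) ^ (i * j)) • E.mul y x)

end Op

section UEnv

variable {M N : Type u} [AddCommGroup M] [Module k M] [AddCommGroup N] [Module k N]

/-- A pair `(f, g)` where `f : A → D` is a differential graded algebra map and
`g : A → D_L` is a differential graded Lie algebra map (into the graded commutator Lie
structure of `D`), satisfying the two compatibility conditions of the universal property
of the universal enveloping algebra of a differential graded Poisson algebra. -/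
def UEPair (P : DGPAOn k M) (D : DGAOn k N) (f g : M →ₗ[k] N) : Prop :=
  (∀ {n : ℤ} {x : M}, x ∈ P.gr n → f x ∈ D.gr n) ∧
  (∀ {n : ℤ} {x : M}, x ∈ P.gr n → g x ∈ D.gr n) ∧
  (∀ a b : M, f (P.mul a b) = D.mul (f a) (f b)) ∧
  f P.one = D.one ∧
  (∀ a : M, f (P.d a) = D.d (f a)) ∧
  (∀ a : M, g (P.d a) = D.d (g a)) ∧
  (∀ {i j : ℤ} {a b : M}, a ∈ P.gr i → b ∈ P.gr j →
    g (P.br a b) = D.mul (g a) (g b) - ((-1 : k) ^ (i * j)) • D.mul (g b) (g a)) ∧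
  (∀ {i j : ℤ} {a b : M}, a ∈ P.gr i → b ∈ P.gr j →
    f (P.br a b) = D.mul (g a) (f b) - ((-1 : k) ^ (i * j)) • D.mul (f b) (g a)) ∧
  (∀ {i j : ℤ} {a b : M}, a ∈ P.gr i → b ∈ P.gr j →
    g (P.mul a b) = D.mul (f a) (g b) + ((-1 : k) ^ (i * j)) • D.mul (f b) (g a))

/-- `(E, α, β)` is a universal enveloping algebra of the differential graded Poisson
algebra `P`. -/
def IsUEnv (P : DGPAOn k M) (E : DGAOn k N) (α β : M →ₗ[k] N) : Prop :=
  UEPair P E α β ∧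
  ∀ (D' : Type u) [AddCommGroup D'] [Module k D'] (D : DGAOn k D') (f g : M →ₗ[k] D'),
    UEPair P D f g →
    ∃! φ : N →ₗ[k] D',
      IsDGAHom E D φ ∧ (∀ a : M, φ (α a) = f a) ∧ (∀ a : M, φ (β a) = g a)

end UEnv

section IdealsQuotients

variable {M : Type u} [AddCommGroup M] [Module k M]

/-- `B` is a differential graded Poisson ideal of `P`. -/
def IsDGPIdeal (P : DGPAOn k M) (B : Submodule k M) : Prop :=
  (B = ⨆ n : ℤ, B ⊓ P.gr n) ∧
  (∀ x ∈ B, P.d x ∈ B) ∧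
  (∀ x ∈ B, ∀ a : M, P.mul x a ∈ B) ∧
  (∀ x ∈ B, ∀ a : M, P.mul a x ∈ B) ∧
  (∀ x ∈ B, ∀ a : M, P.br a x ∈ B)

/-- `B` is a differential graded Poisson subalgebra of `P`. -/
def IsDGPSubalg (P : DGPAOn k M) (B : Submodule k M) : Prop :=
  (B = ⨆ n : ℤ, B ⊓ P.gr n) ∧ P.one ∈ B ∧
  (∀ x ∈ B, ∀ y ∈ B, P.mul x y ∈ B) ∧
  (∀ x ∈ B, P.d x ∈ B) ∧
  (∀ x ∈ B, ∀ y ∈ B, P.br x y ∈ B)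

/-- `R` is the quotient differential graded Poisson algebra structure on `M ⧸ B`. -/
def IsQuotDGPA (P : DGPAOn k M) (B : Submodule k M) (R : DGPAOn k (M ⧸ B)) : Prop :=
  (∀ n : ℤ, R.gr n = Submodule.map B.mkQ (P.gr n)) ∧
  R.one = B.mkQ P.one ∧
  (∀ x y : M, R.mul (B.mkQ x) (B.mkQ y) = B.mkQ (P.mul x y)) ∧
  (∀ x : M, R.d (B.mkQ x) = B.mkQ (P.d x)) ∧
  (∀ x y : M, R.br (B.mkQ x) (B.mkQ y) = B.mkQ (P.br x y))

/-- `S` is the differential graded Poisson algebra structure induced on a differential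
graded Poisson subalgebra `B` of `P`. -/
def IsSubDGPA (P : DGPAOn k M) (B : Submodule k M) (S : DGPAOn k B) : Prop :=
  (∀ n : ℤ, S.gr n = Submodule.comap B.subtype (P.gr n)) ∧
  ((S.one : M) = P.one) ∧
  (∀ x y : B, (S.mul x y : M) = P.mul (x : M) (y : M)) ∧
  (∀ x : B, (S.d x : M) = P.d (x : M)) ∧
  (∀ x y : B, (S.br x y : M) = P.br (x : M) (y : M))

/-- The cocycles `ker d` of a differential graded Poisson algebra. -/
def Cocycles (P : DGPAOn k M) : Submodule k M := LinearMap.ker P.d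

/-- The coboundaries `im d`, viewed inside the cocycles. -/
def CobIn (P : DGPAOn k M) : Submodule k (Cocycles P) :=
  Submodule.comap (Cocycles P).subtype (LinearMap.range P.d)

/-- The cohomology `H(A) = ker d / im d` of a differential graded Poisson algebra. -/
abbrev Cohom (P : DGPAOn k M) : Type u := Cocycles P ⧸ CobIn P

/-- The class map `ker d → H(A)`. -/
def cohCls (P : DGPAOn k M) : Cocycles P →ₗ[k] Cohom P := (CobIn P).mkQ

/-- `R` is the graded Poisson algebra structure on the cohomology of `P` (a differential
graded Poisson algebra structure with zero differential, with the induced grading,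
product and bracket). -/
def IsCohomDGPA (P : DGPAOn k M) (R : DGPAOn k (Cohom P)) : Prop :=
  R.d = 0 ∧
  (∀ n : ℤ, R.gr n =
    Submodule.map (cohCls P) (Submodule.comap (Cocycles P).subtype (P.gr n))) ∧
  (∀ h : P.one ∈ Cocycles P, R.one = cohCls P ⟨P.one, h⟩) ∧
  (∀ (a b : Cocycles P) (h : P.mul (a : M) (b : M) ∈ Cocycles P),
    R.mul (cohCls P a) (cohCls P b) = cohCls P ⟨P.mul (a : M) (b : M), h⟩) ∧
  (∀ (a b : Cocycles P) (h : P.br (a : M) (b : M) ∈ Cocycles P),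
    R.br (cohCls P a) (cohCls P b) = cohCls P ⟨P.br (a : M) (b : M), h⟩)

end IdealsQuotients

end Defs

section ModuleDefs

variable {k : Type u} [Field k]

/-- A left differential graded module structure on `X` over the differential graded
algebra `E`. -/
structure DGModOn {N : Type u} [AddCommGroup N] [Module k N] (E : DGAOn k N)
    (X : Type u) [AddCommGroup X] [Module k X] where
  grm : ℤ → Submodule k X
  decomp : DirectSum.Decomposition grm
  act : N →ₗ[k] X →ₗ[k] X
  act_one : ∀ x : X, act E.one x = x
  act_mul : ∀ (r s : N) (x : X), act (E.mul r s) x = act r (act s x)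
  act_mem : ∀ {i j : ℤ} {r : N} {x : X}, r ∈ E.gr i → x ∈ grm j → act r x ∈ grm (i + j)
  dm : X →ₗ[k] X
  dm_mem : ∀ {i : ℤ} {x : X}, x ∈ grm i → dm x ∈ grm (i + 1)
  dm_sq : ∀ x : X, dm (dm x) = 0
  dm_act : ∀ {i : ℤ} {r : N}, r ∈ E.gr i → ∀ x : X,
    dm (act r x) = act (E.d r) x + ((-1 : k) ^ i) • act r (dm x)

/-- A left differential graded Poisson module structure on `X` over the differential
graded Poisson algebra `P`. -/
structure DGPModOn {M : Type u} [AddCommGroup M] [Module k M] (P : DGPAOn k M)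
    (X : Type u) [AddCommGroup X] [Module k X] where
  grm : ℤ → Submodule k X
  decomp : DirectSum.Decomposition grm
  act : M →ₗ[k] X →ₗ[k] X
  act_one : ∀ x : X, act P.one x = x
  act_mul : ∀ (a b : M) (x : X), act (P.mul a b) x = act a (act b x)
  act_mem : ∀ {i j : ℤ} {a : M} {x : X}, a ∈ P.gr i → x ∈ grm j → act a x ∈ grm (i + j)
  dm : X →ₗ[k] X
  dm_mem : ∀ {i : ℤ} {x : X}, x ∈ grm i → dm x ∈ grm (i + 1)
  dm_sq : ∀ x : X, dm (dm x) = 0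
  dm_act : ∀ {i : ℤ} {a : M}, a ∈ P.gr i → ∀ x : X,
    dm (act a x) = act (P.d a) x + ((-1 : k) ^ i) • act a (dm x)
  bact : M →ₗ[k] X →ₗ[k] X
  bact_mem : ∀ {i j : ℤ} {a : M} {x : X}, a ∈ P.gr i → x ∈ grm j → bact a x ∈ grm (i + j)
  bact_amod : ∀ {i j : ℤ} {a b : M}, a ∈ P.gr i → b ∈ P.gr j → ∀ x : X,
    bact a (act b x) = act (P.br a b) x + ((-1 : k) ^ (i * j)) • act b (bact a x)
  bact_mulact : ∀ {i j : ℤ} {a b : M}, a ∈ P.gr i → b ∈ P.gr j → ∀ x : X,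
    bact (P.mul a b) x = act a (bact b x) + ((-1 : k) ^ (i * j)) • act b (bact a x)
  bact_jacobi : ∀ {i j : ℤ} {a b : M}, a ∈ P.gr i → b ∈ P.gr j → ∀ x : X,
    bact a (bact b x) = bact (P.br a b) x + ((-1 : k) ^ (i * j)) • bact b (bact a x)
  dm_bact : ∀ {i : ℤ} {a : M}, a ∈ P.gr i → ∀ x : X,
    dm (bact a x) = bact (P.d a) x + ((-1 : k) ^ i) • bact a (dm x)

/-- A morphism of left differential graded modules. -/
def IsDGModHom {N X Y : Type u} [AddCommGroup N] [Module k N]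
    [AddCommGroup X] [Module k X] [AddCommGroup Y] [Module k Y]
    {E : DGAOn k N} (W : DGModOn E X) (W' : DGModOn E Y) (f : X →ₗ[k] Y) : Prop :=
  (∀ {n : ℤ} {x : X}, x ∈ W.grm n → f x ∈ W'.grm n) ∧
  (∀ x : X, f (W.dm x) = W'.dm (f x)) ∧
  (∀ (r : N) (x : X), f (W.act r x) = W'.act r (f x))

/-- A morphism of left differential graded Poisson modules. -/
def IsDGPModHom {M X Y : Type u} [AddCommGroup M] [Module k M]
    [AddCommGroup X] [Module k X] [AddCommGroup Y] [Module k Y]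
    {P : DGPAOn k M} (V : DGPModOn P X) (V' : DGPModOn P Y) (f : X →ₗ[k] Y) : Prop :=
  (∀ {n : ℤ} {x : X}, x ∈ V.grm n → f x ∈ V'.grm n) ∧
  (∀ x : X, f (V.dm x) = V'.dm (f x)) ∧
  (∀ (a : M) (x : X), f (V.act a x) = V'.act a (f x)) ∧
  (∀ (a : M) (x : X), f (V.bact a x) = V'.bact a (f x))

/-- The correspondence between a differential graded Poisson module structure over `P`
and a differential graded module structure over `A^e` on the same space. -/
def ModCorr {M X : Type u} [AddCommGroup M] [Module k M] [AddCommGroup X] [Module k X]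
    {P : DGPAOn k M} {E : DGAOn k (Env P)}
    (V : DGPModOn P X) (W : DGModOn E X) : Prop :=
  W.grm = V.grm ∧ W.dm = V.dm ∧
  (∀ (a : M) (x : X), W.act (mgen P a) x = V.act a x) ∧
  (∀ (a : M) (x : X), W.act (hgen P a) x = V.bact a x)

end ModuleDefs

/-!
`U(L ⋊ L)` and `(𝕊L)^e` represent the same functor. An algebra map `U(L ⋊ L) → U` is a pair of
linear maps `p, q : L → U` such that the values of `p` commute in the graded sense,
`p [x, y] = [q x, p y]` and `q [x, y] = [q x, q y]`. The images of `m_x` and `h_x` under an algebra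
map `(𝕊L)^e → U` form such a pair. Conversely `p` extends to an algebra map `m : 𝕊L → U`, and `q`
extends uniquely to a graded derivation `h` along `m`, namely the second component of the orbit map
of `(1, 0)` for the action of `𝕊L` on `𝕊L × U` in which `x ∈ L` sends `(b, u)` to
`(x b, m x u ± m b q x)`. Both sides of each of `m {a, b} = [h a, m b]` and `h {a, b} = [h a, h b]`
obey the same Leibniz rules in `a` and in `b`, so these identities follow from the case
`a, b ∈ L`. Compatibility with gradings and differentials only has to be tested on generators.
-/

section QCommutator

variable {k U : Type*} [CommRing k] [Ring U] [Algebra k U]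

/-- The `ε`-commutator `ab - εba`, as a bilinear map. The graded commutator of elements of
degrees `i` and `j` is the case `ε = (-1) ^ (i * j)`; carrying `ε` as a parameter makes sense of
it in algebras without a chosen grading. -/
def qCommutator (ε : k) : U →ₗ[k] U →ₗ[k] U :=
  LinearMap.mul k U - ε • (LinearMap.mul k U).flip

theorem qCommutator_apply (ε : k) (a b : U) : qCommutator ε a b = a * b - ε • (b * a) := rfl

theorem qCommutator_eq_zero_iff {ε : k} {a b : U} :
    qCommutator ε a b = 0 ↔ a * b = ε • (b * a) := sub_eq_zero

theorem qCommutator_mul_right (ε δ : k) (a b c : U) :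
    qCommutator (ε * δ) a (b * c) = qCommutator ε a b * c + ε • (b * qCommutator δ a c) := by
  simp only [qCommutator_apply, sub_mul, mul_sub, smul_sub, smul_mul_assoc, mul_smul_comm,
    smul_smul, mul_assoc]
  abel

theorem qCommutator_mul_left (ε δ : k) (a b c : U) :
    qCommutator (ε * δ) (a * b) c = a * qCommutator δ b c + δ • (qCommutator ε a c * b) := by
  simp only [qCommutator_apply, sub_mul, mul_sub, smul_sub, smul_mul_assoc, mul_smul_comm,
    smul_smul, mul_assoc, mul_comm δ ε]
  abel

theorem qCommutator_antisymm {ε : k} (hε : ε * ε = 1) (a b : U) :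
    qCommutator ε a b = -(ε • qCommutator ε b a) := by
  simp only [qCommutator_apply, smul_sub, smul_smul, hε, one_smul, neg_sub]

theorem qCommutator_one_right (a : U) : qCommutator (1 : k) a 1 = 0 := by
  simp [qCommutator_apply]

end QCommutator

section KoszulSign

variable {k : Type*} [Field k]

theorem neg_one_zpow_mul_self (n : ℤ) : (-1 : k) ^ n * (-1) ^ n = 1 := by
  rw [← mul_zpow, neg_one_mul, neg_neg, one_zpow]

theorem neg_one_zpow_mul_add (i j l : ℤ) :
    (-1 : k) ^ (i * (j + l)) = (-1) ^ (i * j) * (-1) ^ (i * l) := by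
  rw [mul_add, zpow_add₀ (neg_ne_zero.mpr one_ne_zero)]

theorem neg_one_zpow_add_mul (i j l : ℤ) :
    (-1 : k) ^ ((i + j) * l) = (-1) ^ (i * l) * (-1) ^ (j * l) := by
  rw [add_mul, zpow_add₀ (neg_ne_zero.mpr one_ne_zero)]

end KoszulSign

section GradedLinearAlgebra

variable {k ι A U : Type*} [CommRing k] [DecidableEq ι] [AddCommGroup A] [Module k A]
  [AddCommGroup U] [Module k U]

/-- The linear map out of a graded module that agrees with `f i` in degree `i`. -/
def homogeneousGlue (𝒜 : ι → Submodule k A) [DirectSum.Decomposition 𝒜] (f : ι → A →ₗ[k] U) :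
    A →ₗ[k] U :=
  DirectSum.toModule k ι U (fun i => f i ∘ₗ (𝒜 i).subtype) ∘ₗ
    (DirectSum.decomposeLinearEquiv 𝒜).toLinearMap

theorem homogeneousGlue_apply_of_mem (𝒜 : ι → Submodule k A) [DirectSum.Decomposition 𝒜]
    (f : ι → A →ₗ[k] U) {i : ι} {x : A} (hx : x ∈ 𝒜 i) : homogeneousGlue 𝒜 f x = f i x := by
  lift x to 𝒜 i using hx
  simp [homogeneousGlue, DirectSum.decomposeLinearEquiv_apply_coe, DirectSum.toModule_lof]

end GradedLinearAlgebra

section KoszulTwist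

variable {k V A U : Type*} [Field k] [AddCommGroup V] [Module k V] [AddCommGroup A] [Module k A]
  [AddCommGroup U] [Module k U] (𝒱 : ℤ → Submodule k V) [DirectSum.Decomposition 𝒱]
  (𝒜 : ℤ → Submodule k A) [DirectSum.Decomposition 𝒜]

/-- The Koszul sign twist of a bilinear map `B` of graded modules: the bilinear map given on
homogeneous elements by `(-1) ^ (|x||b|) • B x b`. -/
def koszulTwist (B : V →ₗ[k] A →ₗ[k] U) : V →ₗ[k] A →ₗ[k] U :=
  homogeneousGlue 𝒱 fun i => (homogeneousGlue 𝒜 fun j => (-1 : k) ^ (i * j) • B.flip).flip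

theorem koszulTwist_apply_of_mem (B : V →ₗ[k] A →ₗ[k] U) {i j : ℤ} {x : V} {b : A}
    (hx : x ∈ 𝒱 i) (hb : b ∈ 𝒜 j) : koszulTwist 𝒱 𝒜 B x b = (-1 : k) ^ (i * j) • B x b := by
  simp only [koszulTwist, homogeneousGlue_apply_of_mem 𝒱 _ hx, LinearMap.flip_apply,
    homogeneousGlue_apply_of_mem 𝒜 _ hb, LinearMap.smul_apply]

end KoszulTwist

section HomogeneousInduction

variable {k A : Type*} [CommRing k] [Ring A] [Algebra k A]

theorem eq_top_of_mul_mem_of_adjoin_eq_top {s : Set A} (hs : Algebra.adjoin k s = ⊤)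
    {W : Submodule k A} (one_mem : 1 ∈ W) (mul_mem : ∀ x ∈ s, ∀ b ∈ W, x * b ∈ W) : W = ⊤ := by
  rw [eq_top_iff, ← Algebra.top_toSubmodule, ← hs, Algebra.adjoin_eq_span, Submodule.span_le]
  intro a ha
  induction ha using Submonoid.closure_induction_left with
  | one => exact one_mem
  | mul_left x hx b _ hb => exact mul_mem x hx b hb

theorem le_of_graded_mul_mem_of_adjoin_eq_top {ι V : Type*} [DecidableEq ι] [AddMonoid ι]
    [AddCommGroup V] [Module k V] (𝒱 : ι → Submodule k V) [DirectSum.Decomposition 𝒱]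
    (𝒜 : ι → Submodule k A) [GradedRing 𝒜] {g : V →ₗ[k] A}
    (g_mem : ∀ {i x}, x ∈ 𝒱 i → g x ∈ 𝒜 i) (hg : Algebra.adjoin k (Set.range g) = ⊤)
    {Q : ι → Submodule k A} (one_mem : 1 ∈ Q 0)
    (mul_mem : ∀ {i j x b}, x ∈ 𝒱 i → b ∈ 𝒜 j → b ∈ Q j → g x * b ∈ Q (i + j)) (i : ι) :
    𝒜 i ≤ Q i := by
  have independent := (DirectSum.Decomposition.isInternal 𝒜).submodule_iSupIndep
  have iSup_eq_top : ⨆ i, 𝒜 i ⊓ Q i = ⊤ := by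
    refine eq_top_of_mul_mem_of_adjoin_eq_top hg
      (Submodule.mem_iSup_of_mem 0 ⟨SetLike.GradedOne.one_mem, one_mem⟩) ?_
    rintro _ ⟨x, rfl⟩ b hb
    induction x using DirectSum.Decomposition.inductionOn 𝒱 with
    | zero => simp
    | add x y hx hy => rw [map_add, add_mul]; exact add_mem hx hy
    | @homogeneous i x =>
      induction hb using Submodule.iSup_induction' with
      | mem j b hb =>
        exact Submodule.mem_iSup_of_mem (i + j)
          ⟨SetLike.mul_mem_graded (g_mem x.2) hb.1, mul_mem x.2 hb.1 hb.2⟩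
      | zero => simp
      | add b c _ _ hb hc => rw [mul_add]; exact add_mem hb hc
  have inf_eq : (fun i => 𝒜 i ⊓ Q i) = 𝒜 :=
    (independent.le_iff_eq_of_iSup_eq_top iSup_eq_top).mp fun _ => inf_le_left
  exact inf_eq_left.mp (congrFun inf_eq i)

end HomogeneousInduction

attribute [instance] DGLAOn.decomp DGAOn.decomp DGPAOn.decomp

section PresentedAlgebras

variable {k : Type u} [Field k] {V : Type u} [AddCommGroup V] [Module k V]
  {U : Type*} [Ring U] [Algebra k U]

theorem adjoin_range_mkAlgHom_comp_ι (r : TensorAlgebra k V → TensorAlgebra k V → Prop) :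
    Algebra.adjoin k
      (Set.range ((RingQuot.mkAlgHom k r).toLinearMap ∘ₗ TensorAlgebra.ι k)) = ⊤ := by
  rw [LinearMap.coe_comp, Set.range_comp, AlgHom.coe_toLinearMap, ← AlgHom.map_adjoin,
    TensorAlgebra.adjoin_range_ι, Algebra.map_top, AlgHom.range_eq_top]
  exact RingQuot.mkAlgHom_surjective k r

variable {L : DGLAOn k V}

theorem adjoin_range_uGen : Algebra.adjoin k (Set.range (uGen L)) = ⊤ :=
  adjoin_range_mkAlgHom_comp_ι (LieRel L)

theorem uGen_br {i j : ℤ} {x y : V} (hx : x ∈ L.gr i) (hy : y ∈ L.gr j) :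
    uGen L (L.br x y) = qCommutator ((-1 : k) ^ (i * j)) (uGen L x) (uGen L y) := by
  simpa [uGen, qCommutator_apply] using (RingQuot.mkAlgHom_rel k (LieRel.rel hx hy)).symm

/-- The algebra map out of `U(L)` induced by a linear map that takes brackets to graded
commutators. -/
def ULie.lift (f : V →ₗ[k] U) (hf : ∀ {i j x y}, x ∈ L.gr i → y ∈ L.gr j →
    f (L.br x y) = qCommutator ((-1 : k) ^ (i * j)) (f x) (f y)) : ULie L →ₐ[k] U :=
  RingQuot.liftAlgHom k ⟨TensorAlgebra.lift k f, by
    rintro _ _ ⟨hx, hy⟩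
    simp [hf hx hy, qCommutator_apply]⟩

theorem ULie.lift_uGen (f : V →ₗ[k] U) (hf : ∀ {i j x y}, x ∈ L.gr i → y ∈ L.gr j →
    f (L.br x y) = qCommutator ((-1 : k) ^ (i * j)) (f x) (f y)) (x : V) :
    ULie.lift f hf (uGen L x) = f x := by
  simp [ULie.lift, uGen]

theorem adjoin_range_sGen : Algebra.adjoin k (Set.range (sGen L)) = ⊤ :=
  adjoin_range_mkAlgHom_comp_ι (SymRel L)

theorem sGen_mul_sGen {i j : ℤ} {x y : V} (hx : x ∈ L.gr i) (hy : y ∈ L.gr j) :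
    sGen L x * sGen L y = (-1 : k) ^ (i * j) • (sGen L y * sGen L x) := by
  simpa [sGen] using RingQuot.mkAlgHom_rel k (SymRel.rel hx hy)

/-- The algebra map out of `𝕊L` induced by a linear map with graded-commuting values. -/
def SymAlg.lift {W : Type*} [Semiring W] [Algebra k W] (f : V →ₗ[k] W)
    (hf : ∀ {i j x y}, x ∈ L.gr i → y ∈ L.gr j →
      f x * f y = (-1 : k) ^ (i * j) • (f y * f x)) : SymAlg L →ₐ[k] W :=
  RingQuot.liftAlgHom k ⟨TensorAlgebra.lift k f, by
    rintro _ _ ⟨hx, hy⟩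
    simp [hf hx hy]⟩

theorem SymAlg.lift_sGen {W : Type*} [Semiring W] [Algebra k W] (f : V →ₗ[k] W)
    (hf : ∀ {i j x y}, x ∈ L.gr i → y ∈ L.gr j →
      f x * f y = (-1 : k) ^ (i * j) • (f y * f x)) (x : V) :
    SymAlg.lift f hf (sGen L x) = f x := by
  simp [SymAlg.lift, sGen]

end PresentedAlgebras

section LeibnizPair

variable {k : Type u} [Field k] {M : Type u} [AddCommGroup M] [Module k M] {U : Type*} [Ring U]
  [Algebra k U]

/-- A unital multiplicative map `f` out of a graded Poisson algebra `A` together with a graded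
derivation `g` along `f`: the conditions on `(m, h)` in `A^e` that do not involve the bracket. -/
structure LeibnizPair (P : DGPAOn k M) (f g : M →ₗ[k] U) : Prop where
  fst_one : f P.one = 1
  fst_mul : ∀ a b, f (P.mul a b) = f a * f b
  snd_mul : ∀ {i j a b}, a ∈ P.gr i → b ∈ P.gr j →
    g (P.mul a b) = f a * g b + (-1 : k) ^ (i * j) • (f b * g a)

/-- The relations between `a ↦ m_a` and `a ↦ h_a` that present `A^e`. -/
structure EnvPair (P : DGPAOn k M) (f g : M →ₗ[k] U) : Prop extends LeibnizPair P f g where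
  fst_br : ∀ {i j a b}, a ∈ P.gr i → b ∈ P.gr j →
    f (P.br a b) = qCommutator ((-1 : k) ^ (i * j)) (g a) (f b)
  snd_br : ∀ {i j a b}, a ∈ P.gr i → b ∈ P.gr j →
    g (P.br a b) = qCommutator ((-1 : k) ^ (i * j)) (g a) (g b)

theorem envPair_mgen_hgen (P : DGPAOn k M) : EnvPair P (mgen P) (hgen P) where
  fst_one := by simpa [mgen] using RingQuot.mkAlgHom_rel k (EnvRel.relone (P := P))
  fst_mul a b := by simpa [mgen] using RingQuot.mkAlgHom_rel k (EnvRel.relmul (P := P) a b)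
  snd_mul ha hb := by
    simpa [mgen, hgen] using RingQuot.mkAlgHom_rel k (EnvRel.relhmul ha hb)
  fst_br ha hb := by
    simpa [mgen, hgen, qCommutator_apply] using RingQuot.mkAlgHom_rel k (EnvRel.relmbr ha hb)
  snd_br ha hb := by
    simpa [hgen, qCommutator_apply] using RingQuot.mkAlgHom_rel k (EnvRel.relhbr ha hb)

variable {P : DGPAOn k M} {f g : M →ₗ[k] U}

/-- The algebra map out of `A^e` that sends `m_a` to `f a` and `h_a` to `g a`. -/
def Env.lift (h : EnvPair P f g) : Env P →ₐ[k] U :=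
  RingQuot.liftAlgHom k ⟨TensorAlgebra.lift k (f.coprod g), by
    rintro _ _ (_ | _ | ⟨ha, hb⟩ | ⟨ha, hb⟩ | ⟨ha, hb⟩)
    · simp [h.fst_one]
    · simp [h.fst_mul]
    · simp [h.snd_mul ha hb]
    · simp [h.fst_br ha hb, qCommutator_apply]
    · simp [h.snd_br ha hb, qCommutator_apply]⟩

theorem Env.lift_mgen (h : EnvPair P f g) (a : M) : Env.lift h (mgen P a) = f a := by
  simp [Env.lift, mgen]

theorem Env.lift_hgen (h : EnvPair P f g) (a : M) : Env.lift h (hgen P a) = g a := by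
  simp [Env.lift, hgen]

theorem Env.hom_ext {φ ψ : Env P →ₐ[k] U} (hm : ∀ a, φ (mgen P a) = ψ (mgen P a))
    (hh : ∀ a, φ (hgen P a) = ψ (hgen P a)) : φ = ψ :=
  RingQuot.ringQuot_ext' _ _ _ <| TensorAlgebra.hom_ext <|
    LinearMap.prod_ext (LinearMap.ext hm) (LinearMap.ext hh)

theorem LeibnizPair.snd_one (h : LeibnizPair P f g) : g P.one = 0 := by
  simpa [h.fst_one, P.one_mul] using h.snd_mul P.one_mem P.one_mem

theorem LeibnizPair.map {W : Type*} [Ring W] [Algebra k W] (h : LeibnizPair P f g)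
    (φ : U →ₐ[k] W) : LeibnizPair P (φ.toLinearMap ∘ₗ f) (φ.toLinearMap ∘ₗ g) where
  fst_one := by simp [h.fst_one]
  fst_mul a b := by simp [h.fst_mul]
  snd_mul ha hb := by simp [h.snd_mul ha hb]

theorem LeibnizPair.fst_mul_comm (h : LeibnizPair P f g) {i j : ℤ} {a b : M} (ha : a ∈ P.gr i)
    (hb : b ∈ P.gr j) : f a * f b = (-1 : k) ^ (i * j) • (f b * f a) := by
  rw [← h.fst_mul, P.mul_comm ha hb, map_smul, h.fst_mul]

theorem DGPAOn.br_one {i : ℤ} {a : M} (ha : a ∈ P.gr i) : P.br a P.one = 0 := by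
  simpa [P.mul_one, P.one_mul] using P.br_deriv ha P.one_mem P.one_mem

theorem DGPAOn.one_br {i : ℤ} {a : M} (ha : a ∈ P.gr i) : P.br P.one a = 0 := by
  rw [P.br_antisymm P.one_mem ha, P.br_one ha, smul_zero, neg_zero]

theorem DGPAOn.mul_br {i j l : ℤ} {a b c : M} (ha : a ∈ P.gr i) (hb : b ∈ P.gr j)
    (hc : c ∈ P.gr l) :
    P.br (P.mul a b) c =
      P.mul a (P.br b c) + (-1 : k) ^ (i * j) • P.mul b (P.br a c) := by
  have hil := neg_one_zpow_mul_self (k := k) (i * l)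
  have hjl := neg_one_zpow_mul_self (k := k) (j * l)
  rw [P.br_antisymm (P.mul_mem ha hb) hc, P.br_deriv hc ha hb, P.br_antisymm hc ha,
    P.br_antisymm hc hb, map_neg, LinearMap.neg_apply, map_neg, map_smul, map_smul,
    LinearMap.smul_apply, P.mul_comm (P.br_mem ha hc) hb, neg_one_zpow_add_mul,
    neg_one_zpow_add_mul, _root_.mul_comm l i, _root_.mul_comm l j]
  match_scalars
  · linear_combination
      (-1 : k) ^ (i * j) * ((-1) ^ (j * l) * (-1) ^ (j * l) * hil + hjl)
  · linear_combination (-1 : k) ^ (j * l) * (-1) ^ (j * l) * hil + hjl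

theorem LeibnizPair.fst_br_mul (h : LeibnizPair P f g) {i j l : ℤ} {a b c : M}
    (ha : a ∈ P.gr i) (hb : b ∈ P.gr j) (hc : c ∈ P.gr l)
    (hab : f (P.br a b) = qCommutator ((-1 : k) ^ (i * j)) (g a) (f b))
    (hac : f (P.br a c) = qCommutator ((-1 : k) ^ (i * l)) (g a) (f c)) :
    f (P.br a (P.mul b c)) =
      qCommutator ((-1 : k) ^ (i * (j + l))) (g a) (f (P.mul b c)) := by
  rw [P.br_deriv ha hb hc, map_add, map_smul, h.fst_mul, h.fst_mul, h.fst_mul, hab, hac,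
    neg_one_zpow_mul_add, qCommutator_mul_right]

theorem LeibnizPair.fst_mul_br (h : LeibnizPair P f g) {i j l : ℤ} {a b c : M}
    (ha : a ∈ P.gr i) (hb : b ∈ P.gr j) (hc : c ∈ P.gr l)
    (hac : f (P.br a c) = qCommutator ((-1 : k) ^ (i * l)) (g a) (f c))
    (hbc : f (P.br b c) = qCommutator ((-1 : k) ^ (j * l)) (g b) (f c)) :
    f (P.br (P.mul a b) c) =
      qCommutator ((-1 : k) ^ ((i + j) * l)) (g (P.mul a b)) (f c) := by
  have fac := qCommutator_eq_zero_iff.mpr (h.fst_mul_comm ha hc)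
  have fbc := qCommutator_eq_zero_iff.mpr (h.fst_mul_comm hb hc)
  have left_term : qCommutator ((-1 : k) ^ ((i + j) * l)) (f a * g b) (f c) =
      f a * f (P.br b c) := by
    rw [neg_one_zpow_add_mul, qCommutator_mul_left, fac, hbc, zero_mul, smul_zero, add_zero]
  have right_term : qCommutator ((-1 : k) ^ ((i + j) * l)) (f b * g a) (f c) =
      f b * f (P.br a c) := by
    rw [add_comm, neg_one_zpow_add_mul, qCommutator_mul_left, fbc, hac, zero_mul, smul_zero,
      add_zero]
  rw [P.mul_br ha hb hc, h.snd_mul ha hb, map_add, map_smul, h.fst_mul, h.fst_mul, map_add,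
    map_smul, LinearMap.add_apply, LinearMap.smul_apply, left_term, right_term]

theorem LeibnizPair.snd_br_mul (h : LeibnizPair P f g) {i j l : ℤ} {a b c : M}
    (ha : a ∈ P.gr i) (hb : b ∈ P.gr j) (hc : c ∈ P.gr l)
    (fab : f (P.br a b) = qCommutator ((-1 : k) ^ (i * j)) (g a) (f b))
    (fac : f (P.br a c) = qCommutator ((-1 : k) ^ (i * l)) (g a) (f c))
    (gab : g (P.br a b) = qCommutator ((-1 : k) ^ (i * j)) (g a) (g b))
    (gac : g (P.br a c) = qCommutator ((-1 : k) ^ (i * l)) (g a) (g c)) :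
    g (P.br a (P.mul b c)) =
      qCommutator ((-1 : k) ^ (i * (j + l))) (g a) (g (P.mul b c)) := by
  have sign_cancel : (-1 : k) ^ (i * j) * (-1) ^ (j * (i + l)) = (-1) ^ (j * l) := by
    rw [neg_one_zpow_mul_add, mul_comm j i, ← mul_assoc, neg_one_zpow_mul_self, one_mul]
  have bc_term : qCommutator ((-1 : k) ^ (i * (j + l))) (g a) (f b * g c) =
      f (P.br a b) * g c + (-1 : k) ^ (i * j) • (f b * g (P.br a c)) := by
    rw [neg_one_zpow_mul_add, qCommutator_mul_right, fab, gac]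
  have cb_term : qCommutator ((-1 : k) ^ (i * (j + l))) (g a) (f c * g b) =
      f (P.br a c) * g b + (-1 : k) ^ (i * l) • (f c * g (P.br a b)) := by
    rw [add_comm, neg_one_zpow_mul_add, qCommutator_mul_right, fac, gab]
  rw [P.br_deriv ha hb hc, h.snd_mul hb hc, map_add, map_smul, map_add, map_smul,
    h.snd_mul (P.br_mem ha hb) hc, h.snd_mul hb (P.br_mem ha hc), bc_term, cb_term, smul_add,
    smul_smul, sign_cancel, neg_one_zpow_add_mul]
  module

end LeibnizPair

section SymmetricAlgebra

variable {k : Type u} [Field k] {V : Type u} [AddCommGroup V] [Module k V] {L : DGLAOn k V}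
  {R : DGPAOn k (SymAlg L)} {U : Type*} [Ring U] [Algebra k U]

theorem IsSymDGPA.gr_le (hR : IsSymDGPA L R) {Q : ℤ → Submodule k (SymAlg L)}
    (one_mem : R.one ∈ Q 0)
    (mul_mem : ∀ {i j x b}, x ∈ L.gr i → b ∈ R.gr j → b ∈ Q j → R.mul (sGen L x) b ∈ Q (i + j))
    (i : ℤ) : R.gr i ≤ Q i := by
  obtain ⟨mul_eq, one_eq, sGen_mem, -⟩ := hR
  let _ : GradedRing R.gr :=
    { R.decomp with
      one_mem := one_eq ▸ R.one_mem
      mul_mem := fun _ _ _ _ ha hb => mul_eq _ _ ▸ R.mul_mem ha hb }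
  exact le_of_graded_mul_mem_of_adjoin_eq_top L.gr R.gr sGen_mem adjoin_range_sGen
    (one_eq ▸ one_mem) (fun hx hb hQ => mul_eq _ _ ▸ mul_mem hx hb hQ) i

/-- The operator `(b, u) ↦ (x b, m x u + (-1) ^ (|x||b|) m b q x)` on `𝕊L × U`. The pairs
`(b, h b)` are stable under these operators exactly if `h` is a derivation along `m` extending
`q`. -/
def derivationStep (R : DGPAOn k (SymAlg L)) (m : SymAlg L →ₐ[k] U) (q : V →ₗ[k] U) :
    V →ₗ[k] Module.End k (SymAlg L × U) :=
  LinearMap.mk₂ k (fun x z => (sGen L x * z.1, m (sGen L x) * z.2 +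
      koszulTwist L.gr R.gr ((LinearMap.mul k U ∘ₗ m.toLinearMap).flip ∘ₗ q) x z.1))
    (fun x y z => by ext <;> simp [add_mul]; abel)
    (fun c x z => by ext <;> simp [smul_add])
    (fun x z w => by ext <;> simp [mul_add]; abel)
    (fun c x z => by ext <;> simp [smul_add])

theorem derivationStep_apply {m : SymAlg L →ₐ[k] U} {q : V →ₗ[k] U} {i j : ℤ} {x : V}
    {b : SymAlg L} (hx : x ∈ L.gr i) (hb : b ∈ R.gr j) (u : U) :
    derivationStep R m q x (b, u) =
      (sGen L x * b, m (sGen L x) * u + (-1 : k) ^ (i * j) • (m b * q x)) := by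
  simp [derivationStep, koszulTwist_apply_of_mem L.gr R.gr _ hx hb]

theorem IsSymDGPA.derivationStep_mul_comm (hR : IsSymDGPA L R) (m : SymAlg L →ₐ[k] U)
    (q : V →ₗ[k] U) {i j : ℤ} {x y : V} (hx : x ∈ L.gr i) (hy : y ∈ L.gr j) :
    derivationStep R m q x * derivationStep R m q y =
      (-1 : k) ^ (i * j) • (derivationStep R m q y * derivationStep R m q x) := by
  obtain ⟨mul_eq, -, sGen_mem, -⟩ := hR
  have hsxy := sGen_mul_sGen hx hy
  have hmxy : m (sGen L x) * m (sGen L y) =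
      (-1 : k) ^ (i * j) • (m (sGen L y) * m (sGen L x)) := by
    rw [← map_mul, hsxy, map_smul, map_mul]
  suffices h : ∀ {l b}, b ∈ R.gr l → ∀ u,
      derivationStep R m q x (derivationStep R m q y (b, u)) =
        (-1 : k) ^ (i * j) • derivationStep R m q y (derivationStep R m q x (b, u)) by
    refine LinearMap.prod_ext ?_ (LinearMap.ext fun u => h (R.gr 0).zero_mem u)
    exact DirectSum.decompose_lhom_ext R.gr fun l => LinearMap.ext fun b => h b.2 0
  intro l b hb u
  have hxb := mul_eq _ _ ▸ R.mul_mem (sGen_mem hx) hb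
  have hyb := mul_eq _ _ ▸ R.mul_mem (sGen_mem hy) hb
  rw [derivationStep_apply hy hb, derivationStep_apply hx hyb, derivationStep_apply hx hb,
    derivationStep_apply hy hxb]
  have sign_cancel : (-1 : k) ^ (i * j) * (-1) ^ (j * (i + l)) = (-1) ^ (j * l) := by
    rw [neg_one_zpow_mul_add, mul_comm j i, ← mul_assoc, neg_one_zpow_mul_self, one_mul]
  rw [Prod.smul_mk]
  congr 1
  · rw [← mul_assoc, hsxy, smul_mul_assoc, mul_assoc]
  · rw [mul_add, ← mul_assoc, hmxy, smul_add, smul_smul, sign_cancel, map_mul, map_mul,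
      neg_one_zpow_mul_add]
    simp only [mul_add, smul_add, smul_mul_assoc, mul_smul_comm, smul_smul, mul_assoc]
    abel

/-- The orbit map `a ↦ a · (1, 0)` of the action of `𝕊L` on `𝕊L × U` by `derivationStep`. Its
second component is the derivation along `m` that extends `q`. -/
def derivationOrbit (hR : IsSymDGPA L R) (m : SymAlg L →ₐ[k] U) (q : V →ₗ[k] U) :
    SymAlg L →ₗ[k] SymAlg L × U :=
  LinearMap.applyₗ ((1, 0) : SymAlg L × U) ∘ₗ
    (SymAlg.lift (derivationStep R m q) (hR.derivationStep_mul_comm m q)).toLinearMap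

theorem derivationOrbit_one (hR : IsSymDGPA L R) (m : SymAlg L →ₐ[k] U) (q : V →ₗ[k] U) :
    derivationOrbit hR m q 1 = (1, 0) := by
  simp [derivationOrbit]

theorem derivationOrbit_sGen_mul (hR : IsSymDGPA L R) (m : SymAlg L →ₐ[k] U) (q : V →ₗ[k] U)
    (x : V) (b : SymAlg L) :
    derivationOrbit hR m q (sGen L x * b) =
      derivationStep R m q x (derivationOrbit hR m q b) := by
  simp [derivationOrbit, SymAlg.lift_sGen]

theorem derivationOrbit_fst (hR : IsSymDGPA L R) (m : SymAlg L →ₐ[k] U) (q : V →ₗ[k] U)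
    (a : SymAlg L) : (derivationOrbit hR m q a).1 = a := by
  have eq_top : LinearMap.eqLocus (LinearMap.fst k _ _ ∘ₗ derivationOrbit hR m q) .id = ⊤ := by
    refine eq_top_of_mul_mem_of_adjoin_eq_top adjoin_range_sGen ?_ ?_
    · simp [LinearMap.mem_eqLocus, derivationOrbit_one]
    · rintro _ ⟨x, rfl⟩ b hb
      simpa [LinearMap.mem_eqLocus, derivationOrbit_sGen_mul, derivationStep] using
        congrArg (sGen L x * ·) hb
  exact LinearMap.congr_fun (LinearMap.eqLocus_eq_top.mp eq_top) a

theorem IsSymDGPA.exists_map_sGen_mul_eq (hR : IsSymDGPA L R) (m : SymAlg L →ₐ[k] U)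
    (q : V →ₗ[k] U) : ∃ g : SymAlg L →ₗ[k] U, g 1 = 0 ∧
      ∀ {i j x b}, x ∈ L.gr i → b ∈ R.gr j → g (sGen L x * b) =
        m (sGen L x) * g b + (-1 : k) ^ (i * j) • (m b * q x) := by
  refine ⟨LinearMap.snd k _ _ ∘ₗ derivationOrbit hR m q, by simp [derivationOrbit_one],
    fun {i j x b} hx hb => ?_⟩
  have orbit_eq : derivationOrbit hR m q b = (b, (derivationOrbit hR m q b).2) :=
    Prod.ext (derivationOrbit_fst hR m q b) rfl
  rw [LinearMap.comp_apply, derivationOrbit_sGen_mul, orbit_eq, derivationStep_apply hx hb]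
  rfl

theorem IsSymDGPA.leibnizPair_of_sGen_mul (hR : IsSymDGPA L R) {m : SymAlg L →ₐ[k] U}
    {g : SymAlg L →ₗ[k] U} (g_one : g 1 = 0)
    (g_mul : ∀ {i j x b}, x ∈ L.gr i → b ∈ R.gr j → g (sGen L x * b) =
      m (sGen L x) * g b + (-1 : k) ^ (i * j) • (m b * g (sGen L x))) :
    LeibnizPair R m.toLinearMap g := by
  obtain ⟨mul_eq, one_eq, sGen_mem, -⟩ := id hR
  have m_comm {i j a b} (ha : a ∈ R.gr i) (hb : b ∈ R.gr j) :
      m a * m b = (-1 : k) ^ (i * j) • (m b * m a) := by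
    rw [← map_mul, ← mul_eq, R.mul_comm ha hb, mul_eq, map_smul, map_mul]
  refine ⟨by simp [one_eq], fun a b => by simp [mul_eq], fun {i j a b} ha hb => ?_⟩
  refine hR.gr_le (Q := fun i => LinearMap.eqLocus (g ∘ₗ R.mul.flip b)
    (LinearMap.mulRight k (g b) ∘ₗ m.toLinearMap +
      (-1 : k) ^ (i * j) • (LinearMap.mulLeft k (m b) ∘ₗ g))) ?_ ?_ i ha
  · simp [LinearMap.mem_eqLocus, one_eq, g_one, mul_eq]
  · intro l n x a hx ha leibniz_ab
    replace leibniz_ab : g (a * b) = m a * g b + (-1 : k) ^ (n * j) • (m b * g a) := by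
      simpa [LinearMap.mem_eqLocus, mul_eq] using leibniz_ab
    suffices g (sGen L x * (a * b)) = m (sGen L x) * m a * g b +
        (-1 : k) ^ ((l + n) * j) • (m b * g (sGen L x * a)) by
      simpa [LinearMap.mem_eqLocus, mul_eq, mul_assoc] using this
    have swap_xb : m (sGen L x) * (m b * g a) =
        (-1 : k) ^ (l * j) • (m b * (m (sGen L x) * g a)) := by
      rw [← mul_assoc, m_comm (sGen_mem hx) hb, smul_mul_assoc, mul_assoc]
    have swap_ab : m (a * b) * g (sGen L x) =
        (-1 : k) ^ (n * j) • (m b * (m a * g (sGen L x))) := by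
      rw [map_mul, m_comm ha hb, smul_mul_assoc, mul_assoc]
    rw [g_mul hx (mul_eq _ _ ▸ R.mul_mem ha hb), leibniz_ab, g_mul hx ha, neg_one_zpow_mul_add,
      neg_one_zpow_add_mul, swap_ab]
    simp only [mul_add, mul_smul_comm, swap_xb, mul_assoc]
    module

theorem IsSymDGPA.exists_leibnizPair (hR : IsSymDGPA L R) (m : SymAlg L →ₐ[k] U)
    (q : V →ₗ[k] U) :
    ∃ g, LeibnizPair R m.toLinearMap g ∧ ∀ x, g (sGen L x) = q x := by
  obtain ⟨g, g_one, g_mul⟩ := hR.exists_map_sGen_mul_eq m q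
  have one_mem : (1 : SymAlg L) ∈ R.gr 0 := hR.2.1 ▸ R.one_mem
  have g_sGen : g ∘ₗ sGen L = q := DirectSum.decompose_lhom_ext L.gr fun i =>
    LinearMap.ext fun x => by simpa [g_one] using g_mul x.2 one_mem
  subst g_sGen
  exact ⟨g, hR.leibnizPair_of_sGen_mul g_one g_mul, fun _ => rfl⟩

variable {f g : SymAlg L →ₗ[k] U}

theorem IsSymDGPA.fst_br_of_sGen (hR : IsSymDGPA L R) (h : LeibnizPair R f g)
    (br_sGen : ∀ {i j x y}, x ∈ L.gr i → y ∈ L.gr j → f (sGen L (L.br x y)) =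
      qCommutator ((-1 : k) ^ (i * j)) (g (sGen L x)) (f (sGen L y)))
    {i j : ℤ} {a b : SymAlg L} (ha : a ∈ R.gr i) (hb : b ∈ R.gr j) :
    f (R.br a b) = qCommutator ((-1 : k) ^ (i * j)) (g a) (f b) := by
  obtain ⟨-, -, sGen_mem, -, br_eq⟩ := id hR
  have br_sGen_left {i j x b} (hx : x ∈ L.gr i) (hb : b ∈ R.gr j) :
      f (R.br (sGen L x) b) = qCommutator ((-1 : k) ^ (i * j)) (g (sGen L x)) (f b) := by
    refine hR.gr_le (Q := fun j => LinearMap.eqLocus (f ∘ₗ R.br (sGen L x))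
      (qCommutator ((-1 : k) ^ (i * j)) (g (sGen L x)) ∘ₗ f)) ?_ ?_ j hb
    · simp [LinearMap.mem_eqLocus, R.br_one (sGen_mem hx), h.fst_one, qCommutator_one_right]
    · exact fun hy hc ih => h.fst_br_mul (sGen_mem hx) (sGen_mem hy) hc
        (by rw [br_eq, br_sGen hx hy]) ih
  refine hR.gr_le (Q := fun i => LinearMap.eqLocus (f ∘ₗ R.br.flip b)
    ((qCommutator ((-1 : k) ^ (i * j))).flip (f b) ∘ₗ g)) ?_ ?_ i ha
  · simp [LinearMap.mem_eqLocus, R.one_br hb, h.snd_one]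
  · exact fun hx hc ih => h.fst_mul_br (sGen_mem hx) hc hb (br_sGen_left hx hb) ih

theorem IsSymDGPA.snd_br_of_sGen (hR : IsSymDGPA L R) (h : LeibnizPair R f g)
    (fst_br : ∀ {i j a b}, a ∈ R.gr i → b ∈ R.gr j →
      f (R.br a b) = qCommutator ((-1 : k) ^ (i * j)) (g a) (f b))
    (br_sGen : ∀ {i j x y}, x ∈ L.gr i → y ∈ L.gr j → g (sGen L (L.br x y)) =
      qCommutator ((-1 : k) ^ (i * j)) (g (sGen L x)) (g (sGen L y)))
    {i j : ℤ} {a b : SymAlg L} (ha : a ∈ R.gr i) (hb : b ∈ R.gr j) :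
    g (R.br a b) = qCommutator ((-1 : k) ^ (i * j)) (g a) (g b) := by
  obtain ⟨-, -, sGen_mem, -, br_eq⟩ := id hR
  have of_sGen_right {i a} (ha : a ∈ R.gr i)
      (br_sGen_right : ∀ {j y}, y ∈ L.gr j →
        g (R.br a (sGen L y)) = qCommutator ((-1 : k) ^ (i * j)) (g a) (g (sGen L y)))
      {j b} (hb : b ∈ R.gr j) :
      g (R.br a b) = qCommutator ((-1 : k) ^ (i * j)) (g a) (g b) := by
    refine hR.gr_le (Q := fun j => LinearMap.eqLocus (g ∘ₗ R.br a)
      (qCommutator ((-1 : k) ^ (i * j)) (g a) ∘ₗ g)) ?_ ?_ j hb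
    · simp [LinearMap.mem_eqLocus, R.br_one ha, h.snd_one]
    · exact fun hy hc ih => h.snd_br_mul ha (sGen_mem hy) hc (fst_br ha (sGen_mem hy))
        (fst_br ha hc) (br_sGen_right hy) ih
  refine of_sGen_right ha (fun {j y} hy => ?_) hb
  have br_sGen_left := of_sGen_right (sGen_mem hy) (fun hx => by rw [br_eq, br_sGen hy hx]) ha
  rw [R.br_antisymm ha (sGen_mem hy), map_neg, map_smul, br_sGen_left, mul_comm j i,
    ← qCommutator_antisymm (neg_one_zpow_mul_self _)]

end SymmetricAlgebra

section SemidirectPair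

variable {k : Type u} [Field k] {V : Type u} [AddCommGroup V] [Module k V] {L : DGLAOn k V}
  {U : Type*} [Ring U] [Algebra k U]

/-- The relations that the images `p x` of `(x, 0)` and `q y` of `(0, y)` satisfy in an algebra
under `U(L ⋊ L)`; equivalently, those of `m_x` and `h_y` in an algebra under `(𝕊L)^e`. -/
structure SemidirectPair (L : DGLAOn k V) (p q : V →ₗ[k] U) : Prop where
  fst_mul_comm : ∀ {i j x y}, x ∈ L.gr i → y ∈ L.gr j →
    p x * p y = (-1 : k) ^ (i * j) • (p y * p x)
  fst_br : ∀ {i j x y}, x ∈ L.gr i → y ∈ L.gr j →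
    p (L.br x y) = qCommutator ((-1 : k) ^ (i * j)) (q x) (p y)
  snd_br : ∀ {i j x y}, x ∈ L.gr i → y ∈ L.gr j →
    q (L.br x y) = qCommutator ((-1 : k) ^ (i * j)) (q x) (q y)

theorem IsSemidirect.semidirectPair_uGen {S : DGLAOn k (V × V)} (hS : IsSemidirect L S) :
    SemidirectPair L (uGen S ∘ₗ .inl k V V) (uGen S ∘ₗ .inr k V V) := by
  obtain ⟨gr_eq, -, br_eq⟩ := hS
  have inl_mem {i x} (hx : x ∈ L.gr i) : (x, (0 : V)) ∈ S.gr i := gr_eq i ▸ ⟨hx, zero_mem _⟩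
  have inr_mem {i x} (hx : x ∈ L.gr i) : ((0 : V), x) ∈ S.gr i := gr_eq i ▸ ⟨zero_mem _, hx⟩
  refine ⟨fun hx hy => ?_, fun hx hy => ?_, fun hx hy => ?_⟩
  · have br_zero := uGen_br (inl_mem hx) (inl_mem hy)
    rw [br_eq hx (zero_mem _) hy (zero_mem _)] at br_zero
    exact qCommutator_eq_zero_iff.mp (by simpa [Prod.mk_zero_zero] using br_zero.symm)
  · simpa [br_eq (zero_mem _) hx hy (zero_mem _)] using uGen_br (inr_mem hx) (inl_mem hy)
  · simpa [br_eq (zero_mem _) hx (zero_mem _) hy] using uGen_br (inr_mem hx) (inr_mem hy)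

theorem SemidirectPair.coprod_br {p q : V →ₗ[k] U} (h : SemidirectPair L p q)
    {S : DGLAOn k (V × V)} (hS : IsSemidirect L S) {i j : ℤ} {z w : V × V} (hz : z ∈ S.gr i)
    (hw : w ∈ S.gr j) :
    p.coprod q (S.br z w) =
      qCommutator ((-1 : k) ^ (i * j)) (p.coprod q z) (p.coprod q w) := by
  obtain ⟨gr_eq, -, br_eq⟩ := hS
  rw [gr_eq] at hz hw
  obtain ⟨x₁, x₂⟩ := z
  obtain ⟨y₁, y₂⟩ := w
  have fst_fst := qCommutator_eq_zero_iff.mpr (h.fst_mul_comm hz.1 hw.1)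
  have fst_snd : qCommutator ((-1 : k) ^ (i * j)) (p x₁) (q y₂) =
      -((-1 : k) ^ (i * j) • p (L.br y₂ x₁)) := by
    rw [qCommutator_antisymm (neg_one_zpow_mul_self _), h.fst_br hw.2 hz.1, mul_comm j i]
  rw [br_eq hz.1 hz.2 hw.1 hw.2]
  simp only [LinearMap.coprod_apply, map_sub, map_smul, map_add, LinearMap.add_apply,
    h.fst_br hz.2 hw.1, h.snd_br hz.2 hw.2, fst_fst, fst_snd]
  abel

variable {R : DGPAOn k (SymAlg L)} {f g : SymAlg L →ₗ[k] U}

theorem EnvPair.semidirectPair (h : EnvPair R f g) (hR : IsSymDGPA L R) :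
    SemidirectPair L (f ∘ₗ sGen L) (g ∘ₗ sGen L) := by
  obtain ⟨-, -, sGen_mem, -, br_eq⟩ := hR
  refine ⟨fun hx hy => h.fst_mul_comm (sGen_mem hx) (sGen_mem hy), fun hx hy => ?_,
    fun hx hy => ?_⟩
  · simpa [br_eq] using h.fst_br (sGen_mem hx) (sGen_mem hy)
  · simpa [br_eq] using h.snd_br (sGen_mem hx) (sGen_mem hy)

theorem SemidirectPair.exists_envPair {p q : V →ₗ[k] U} (h : SemidirectPair L p q)
    (hR : IsSymDGPA L R) :
    ∃ f g : SymAlg L →ₗ[k] U,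
      EnvPair R f g ∧ (∀ x, f (sGen L x) = p x) ∧ ∀ x, g (sGen L x) = q x := by
  let m := SymAlg.lift p h.fst_mul_comm
  have m_sGen (x : V) : m (sGen L x) = p x := SymAlg.lift_sGen p _ x
  obtain ⟨g, leibniz, g_sGen⟩ := hR.exists_leibnizPair m q
  have fst_br {i j a b} (ha : a ∈ R.gr i) (hb : b ∈ R.gr j) :
      m.toLinearMap (R.br a b) = qCommutator ((-1 : k) ^ (i * j)) (g a) (m.toLinearMap b) :=
    hR.fst_br_of_sGen leibniz (fun hx hy => by simpa [m_sGen, g_sGen] using h.fst_br hx hy) ha hb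
  have snd_br {i j a b} (ha : a ∈ R.gr i) (hb : b ∈ R.gr j) :
      g (R.br a b) = qCommutator ((-1 : k) ^ (i * j)) (g a) (g b) :=
    hR.snd_br_of_sGen leibniz fst_br (fun hx hy => by simpa [g_sGen] using h.snd_br hx hy) ha hb
  exact ⟨m.toLinearMap, g, ⟨leibniz, fst_br, snd_br⟩, m_sGen, g_sGen⟩

theorem LeibnizPair.ext_of_sGen {f' g' : SymAlg L →ₗ[k] U} (h : LeibnizPair R f g)
    (h' : LeibnizPair R f' g') (hR : IsSymDGPA L R) (hf : ∀ x, f (sGen L x) = f' (sGen L x))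
    (hg : ∀ x, g (sGen L x) = g' (sGen L x)) : f.prod g = f'.prod g' := by
  obtain ⟨-, -, sGen_mem, -⟩ := id hR
  have gr_le := hR.gr_le (Q := fun _ => LinearMap.eqLocus (f.prod g) (f'.prod g'))
    (by simp [LinearMap.mem_eqLocus, h.fst_one, h'.fst_one, h.snd_one, h'.snd_one])
    fun {_ _ x b} hx hb ih => by
      have ⟨hfb, hgb⟩ : f b = f' b ∧ g b = g' b := by simpa [LinearMap.mem_eqLocus] using ih
      simp [LinearMap.mem_eqLocus, h.fst_mul, h'.fst_mul, h.snd_mul (sGen_mem hx) hb,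
        h'.snd_mul (sGen_mem hx) hb, hf, hg, hfb, hgb]
  exact DirectSum.decompose_lhom_ext R.gr fun i => LinearMap.ext fun a => gr_le i a.2

theorem Env.hom_ext_of_sGen {φ ψ : Env R →ₐ[k] U} (hR : IsSymDGPA L R)
    (hm : ∀ x, φ (mgen R (sGen L x)) = ψ (mgen R (sGen L x)))
    (hh : ∀ x, φ (hgen R (sGen L x)) = ψ (hgen R (sGen L x))) : φ = ψ := by
  have leibniz := (envPair_mgen_hgen R).toLeibnizPair
  have prod_eq := (leibniz.map φ).ext_of_sGen (leibniz.map ψ) hR hm hh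
  exact Env.hom_ext (fun a => congrArg Prod.fst (LinearMap.congr_fun prod_eq a))
    fun a => congrArg Prod.snd (LinearMap.congr_fun prod_eq a)

theorem IsSymDGPA.exists_algEquiv (hR : IsSymDGPA L R) {S : DGLAOn k (V × V)}
    (hS : IsSemidirect L S) : ∃ φ : ULie S ≃ₐ[k] Env R,
      ∀ x y, φ (uGen S (x, y)) = mgen R (sGen L x) + hgen R (sGen L y) := by
  have pair := (envPair_mgen_hgen R).semidirectPair hR
  let φ : ULie S →ₐ[k] Env R := ULie.lift _ (pair.coprod_br hS)
  have φ_uGen (x y : V) : φ (uGen S (x, y)) = mgen R (sGen L x) + hgen R (sGen L y) :=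
    ULie.lift_uGen _ (pair.coprod_br hS) (x, y)
  obtain ⟨f, g, envPair, f_sGen, g_sGen⟩ := hS.semidirectPair_uGen.exists_envPair hR
  let ψ : Env R →ₐ[k] ULie S := Env.lift envPair
  have ψ_mgen (x : V) : ψ (mgen R (sGen L x)) = uGen S (x, 0) :=
    (Env.lift_mgen envPair _).trans (f_sGen x)
  have ψ_hgen (y : V) : ψ (hgen R (sGen L y)) = uGen S (0, y) :=
    (Env.lift_hgen envPair _).trans (g_sGen y)
  have φ_comp_ψ : φ.comp ψ = .id k (Env R) := Env.hom_ext_of_sGen hR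
    (fun x => by simp [ψ_mgen, φ_uGen]) (fun y => by simp [ψ_hgen, φ_uGen])
  have ψ_comp_φ : ψ.comp φ = .id k (ULie S) := by
    refine AlgHom.ext_of_adjoin_eq_top adjoin_range_uGen ?_
    rintro _ ⟨⟨x, y⟩, rfl⟩
    rw [AlgHom.comp_apply, φ_uGen, map_add, ψ_mgen, ψ_hgen, ← map_add]
    simp
  exact ⟨.ofAlgHom φ ψ φ_comp_ψ ψ_comp_φ, φ_uGen⟩

end SemidirectPair

section DifferentialGraded

variable {k : Type u} [Field k] {V N : Type u} [AddCommGroup V] [Module k V] [AddCommGroup N]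
  [Module k N] {L : DGLAOn k V} {E : DGAOn k (ULie L)} {F : DGAOn k N}

theorem DGAOn.d_one (F : DGAOn k N) : F.d F.one = 0 := by
  simpa [F.one_mul, F.mul_one] using F.d_mul F.one_mem F.one_mem

theorem IsULieDGA.gr_le (hE : IsULieDGA L E) {Q : ℤ → Submodule k (ULie L)}
    (one_mem : 1 ∈ Q 0)
    (mul_mem : ∀ {i j x b}, x ∈ L.gr i → b ∈ E.gr j → b ∈ Q j → uGen L x * b ∈ Q (i + j))
    (i : ℤ) : E.gr i ≤ Q i := by
  obtain ⟨mul_eq, one_eq, uGen_mem, -⟩ := hE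
  let _ : GradedRing E.gr :=
    { E.decomp with
      one_mem := one_eq ▸ E.one_mem
      mul_mem := fun _ _ _ _ ha hb => mul_eq _ _ ▸ E.mul_mem ha hb }
  exact le_of_graded_mul_mem_of_adjoin_eq_top L.gr E.gr uGen_mem adjoin_range_uGen one_mem
    mul_mem i

theorem IsULieDGA.isDGAHom (hE : IsULieDGA L E) {φ : ULie L →ₗ[k] N}
    (map_one : φ 1 = F.one) (map_mul : ∀ a b, φ (a * b) = F.mul (φ a) (φ b))
    (map_mem : ∀ {i x}, x ∈ L.gr i → φ (uGen L x) ∈ F.gr i)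
    (map_d : ∀ x, φ (uGen L (L.d x)) = F.d (φ (uGen L x))) : IsDGAHom E F φ := by
  obtain ⟨mul_eq, one_eq, uGen_mem, d_uGen⟩ := id hE
  have gr_le_comap := hE.gr_le (Q := fun i => (F.gr i).comap φ) (by simp [map_one, F.one_mem])
    fun hx _ hb => by simpa [map_mul] using F.mul_mem (map_mem hx) hb
  have d_one : E.d 1 = 0 := one_eq ▸ E.d_one
  have gr_le_eqLocus := hE.gr_le (Q := fun _ => LinearMap.eqLocus (φ ∘ₗ E.d) (F.d ∘ₗ φ))
    (by simp [LinearMap.mem_eqLocus, map_one, F.d_one, d_one])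
    fun {i j x b} hx hb (ih : φ (E.d b) = F.d (φ b)) => by
      change φ (E.d (uGen L x * b)) = F.d (φ (uGen L x * b))
      rw [← mul_eq, E.d_mul (uGen_mem hx) hb, mul_eq, mul_eq, mul_eq, map_add, map_smul, map_mul,
        map_mul, map_mul, F.d_mul (map_mem hx) (gr_le_comap j hb), d_uGen, map_d, ih]
  have d_comm : φ ∘ₗ E.d = F.d ∘ₗ φ := DirectSum.decompose_lhom_ext E.gr fun i =>
    LinearMap.ext fun a => gr_le_eqLocus i a.2
  exact ⟨fun ha => gr_le_comap _ ha, fun a b => by rw [mul_eq, map_mul], by rw [one_eq, map_one],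
    LinearMap.congr_fun d_comm⟩

end DifferentialGraded

/-- for a differential graded Lie algebra `L`, the universal enveloping
algebra `(𝕊L)^e` of the graded symmetric algebra of `L` (a differential graded Poisson
algebra) is isomorphic, as a differential graded algebra, to the universal enveloping
algebra `U(L ⋊ L)` of the graded semidirect product, via `(x,y) ↦ m_{x} + h_{y}`. -/
theorem stmt_16 (k : Type u) [Field k] (V : Type u) [AddCommGroup V] [Module k V]
    (L : DGLAOn k V)
    (R : DGPAOn k (SymAlg L)) (hR : IsSymDGPA L R)
    (E : DGAOn k (Env R)) (hE : IsEnvDGA R E)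
    (S : DGLAOn k (V × V)) (hS : IsSemidirect L S)
    (EU : DGAOn k (ULie S)) (hEU : IsULieDGA S EU) :
    ∃ φ : ULie S →ₗ[k] Env R,
      IsDGAHom EU E φ ∧ Function.Bijective φ ∧
      ∀ x y : V, φ (uGen S (x, y)) = mgen R (sGen L x) + hgen R (sGen L y) := by
  obtain ⟨φ, φ_uGen⟩ := hR.exists_algEquiv hS
  obtain ⟨-, -, sGen_mem, sGen_d, -⟩ := hR
  obtain ⟨mul_eq, one_eq, mgen_mem, hgen_mem, d_mgen, d_hgen⟩ := hE
  obtain ⟨gr_eq, d_eq, -⟩ := hS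
  have map_mem {i : ℤ} {z : V × V} (hz : z ∈ S.gr i) : φ (uGen S z) ∈ E.gr i := by
    rw [gr_eq] at hz
    rw [← Prod.mk.eta (p := z), φ_uGen]
    exact add_mem (mgen_mem (sGen_mem hz.1)) (hgen_mem (sGen_mem hz.2))
  have map_d (z : V × V) : φ (uGen S (S.d z)) = E.d (φ (uGen S z)) := by
    rw [← Prod.mk.eta (p := z), d_eq, φ_uGen, φ_uGen, map_add, d_mgen, d_hgen, sGen_d, sGen_d]
  refine ⟨φ.toLinearMap, hEU.isDGAHom ?_ ?_ map_mem map_d, φ.bijective, φ_uGen⟩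
  · rw [one_eq]
    exact map_one φ
  · intro a b
    rw [mul_eq]
    exact map_mul φ a b

end DGPaper

end
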